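/- Let σ be a diagonal measure on X^d. If the set of x₁ ∈ X which are compatible with σ has positive Lebesgue measure μ, then σ is a graph joining arising from powers of T. -/

import Mathlib

open MeasureTheory Set
open scoped ENNReal NNReal Classical

noncomputable section

/-- Heights of the towers of the infinite Chacon transformation
(tower `0` is `[0,1)` with a single level, so `chaconH 1 = 8`). -/
def chaconH : ℕ → ℕ
  | 0 => 1
  | n + 1 => 2 * (3 * chaconH n + 1)

/-- Left endpoint of level `k` of tower `n`.  At step `n+1`, tower `n` (which fills
`[0, hₙ·3⁻ⁿ)`) is cut into three subcolumns of equal width; one spacer is added above the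
middle subcolumn and `3hₙ+1` spacers above the third one, the spacers being taken
successively as the leftmost intervals of length `3⁻⁽ⁿ⁺¹⁾` in the unused part of `ℝ₊`;
then the three subcolumns are stacked left under right. -/
def chaconL : ℕ → ℕ → ℝ
  | 0, _ => 0
  | n + 1, k =>
      if k < chaconH n then chaconL n k
      else if k < 2 * chaconH n then chaconL n (k - chaconH n) + (3 : ℝ)⁻¹ ^ (n + 1)
      else if k = 2 * chaconH n then (chaconH n : ℝ) * (3 : ℝ)⁻¹ ^ n
      else if k ≤ 3 * chaconH n then
        chaconL n (k - 2 * chaconH n - 1) + 2 * (3 : ℝ)⁻¹ ^ (n + 1)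
      else (chaconH n : ℝ) * (3 : ℝ)⁻¹ ^ n
        + ((k : ℝ) - 3 * (chaconH n : ℝ)) * (3 : ℝ)⁻¹ ^ (n + 1)

/-- Level `k` of tower `n`: an interval of length `3⁻ⁿ`, closed to the left and open to
the right. -/
def chaconLevel (n k : ℕ) : Set ℝ := Ico (chaconL n k) (chaconL n k + (3 : ℝ)⁻¹ ^ n)

/-- The Chacon transformation on `ℝ`: each point of a non-top level of some tower is sent
to the point directly above it (the value does not depend on the choice of the tower). -/
def chaconT0 (x : ℝ) : ℝ :=
  if h : ∃ p : ℕ × ℕ, p.2 + 1 < chaconH p.1 ∧ x ∈ chaconLevel p.1 p.2 then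
    x - chaconL h.choose.1 h.choose.2 + chaconL h.choose.1 (h.choose.2 + 1)
  else x

/-- The inverse of the Chacon transformation on `ℝ`. -/
def chaconT0inv (x : ℝ) : ℝ :=
  if h : ∃ p : ℕ × ℕ, p.2 + 1 < chaconH p.1 ∧ x ∈ chaconLevel p.1 (p.2 + 1) then
    x - chaconL h.choose.1 (h.choose.2 + 1) + chaconL h.choose.1 h.choose.2
  else x

/-- The space `X = ℝ₊`. -/
abbrev ChaconX : Type := ↥(Set.Ici (0 : ℝ))

/-- The infinite Chacon transformation `T` on `X = ℝ₊`. -/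
def chaconT (x : ChaconX) : ChaconX :=
  ⟨max 0 (chaconT0 (x : ℝ)), Set.mem_Ici.mpr (le_max_left 0 _)⟩

/-- The inverse `T⁻¹` of the Chacon transformation on `X = ℝ₊`. -/
def chaconTinv (x : ChaconX) : ChaconX :=
  ⟨max 0 (chaconT0inv (x : ℝ)), Set.mem_Ici.mpr (le_max_left 0 _)⟩

/-- Integer powers `T^j` of the Chacon transformation. -/
def chaconTZ (j : ℤ) : ChaconX → ChaconX :=
  if 0 ≤ j then chaconT^[j.toNat] else chaconTinv^[(-j).toNat]

/-- Lebesgue measure `μ` on `X = ℝ₊`. -/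
def chaconMu : Measure ChaconX := volume.comap Subtype.val

/-- `C n`: the bottom half of tower `n` (its lowest `hₙ/2` levels), as a subset of `X`. -/
def chaconC (n : ℕ) : Set ChaconX :=
  {x | ∃ k, k < chaconH n / 2 ∧ (x : ℝ) ∈ chaconLevel n k}

/-- `tₙ x ∈ {1,2,3}`: the subcolumn of tower `n` containing `x`
(junk value `0` if `x` is not in tower `n`). -/
def chaconTn (n : ℕ) (x : ChaconX) : ℕ :=
  if h : ∃ k, k < chaconH n ∧ (x : ℝ) ∈ chaconLevel n k then
    1 + (⌊((x : ℝ) - chaconL n h.choose) * (3 : ℝ) ^ (n + 1)⌋).toNat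
  else 0

/-- The Cartesian power `T^{×ι}` of the Chacon transformation, acting coordinatewise. -/
def chaconTd (ι : Type) (x : ι → ChaconX) : ι → ChaconX := fun i => chaconT (x i)

/-- Integer powers `(T^{×ι})^j`, acting coordinatewise. -/
def chaconTdZ (ι : Type) (j : ℤ) (x : ι → ChaconX) : ι → ChaconX := fun i => chaconTZ j (x i)

/-- `Cₙ^ι ⊆ X^ι`. -/
def chaconCd (ι : Type) (n : ℕ) : Set (ι → ChaconX) := {x | ∀ i, x i ∈ chaconC n}

/-- An `n`-box: a Cartesian product of levels of `C n`. -/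
def IsNBox (ι : Type) (n : ℕ) (B : Set (ι → ChaconX)) : Prop :=
  ∃ k : ι → ℕ, (∀ i, k i < chaconH n / 2) ∧
    B = {x : ι → ChaconX | ∀ i, ((x i : ℝ)) ∈ chaconLevel n (k i)}

/-- An `n`-diagonal: a maximal finite family of `n`-boxes `B, T^{×d}B, …, (T^{×d})^ℓ B`,
regarded as the union of its boxes. -/
def IsNDiagonal (ι : Type) (n : ℕ) (D : Set (ι → ChaconX)) : Prop :=
  ∃ (B : Set (ι → ChaconX)) (ℓ : ℕ),
    (∀ j : ℕ, j ≤ ℓ → IsNBox ι n (chaconTdZ ι (j : ℤ) '' B)) ∧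
    ¬ chaconTdZ ι (-1) '' B ⊆ chaconCd ι n ∧
    ¬ chaconTdZ ι ((ℓ : ℤ) + 1) '' B ⊆ chaconCd ι n ∧
    D = ⋃ j ∈ Finset.range (ℓ + 1), chaconTdZ ι (j : ℤ) '' B

/-- A measure is boundedly finite if bounded (measurable) sets have finite measure. -/
def BoundedlyFinite {α : Type*} [MeasurableSpace α] [PseudoMetricSpace α]
    (σ : Measure α) : Prop :=
  ∀ A : Set α, MeasurableSet A → Bornology.IsBounded A → σ A < ⊤

/-- Diagonal measures on `X^ι`: boundedly finite, `T^{×ι}`-invariant measures which are,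
for every large enough `n`, concentrated on a single `n`-diagonal inside `Cₙ^ι`. -/
def IsDiagonalMeasure (ι : Type) [Fintype ι] (σ : Measure (ι → ChaconX)) : Prop :=
  BoundedlyFinite σ ∧ σ.map (chaconTd ι) = σ ∧
    ∃ n₀ : ℕ, 1 ≤ n₀ ∧ ∀ n, n₀ ≤ n →
      ∃ D : Set (ι → ChaconX), IsNDiagonal ι n D ∧ σ (chaconCd ι n \ D) = 0

/-- A wandering set for the `ℤ`-action `Uz`. -/
def ZWandering {α : Type*} (Uz : ℤ → α → α) (W : Set α) : Prop :=
  ∀ j k : ℤ, j ≠ k → Disjoint (Uz j '' W) (Uz k '' W)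

/-- Conservativity: every measurable wandering set is null. -/
def ZConservative {α : Type*} [MeasurableSpace α] (σ : Measure α) (Uz : ℤ → α → α) : Prop :=
  ∀ W : Set α, MeasurableSet W → ZWandering Uz W → σ W = 0

/-- Total dissipativity: mod `σ`, the space is the disjoint union of the iterates of a
wandering set. -/
def ZTotallyDissipative {α : Type*} [MeasurableSpace α] (σ : Measure α)
    (Uz : ℤ → α → α) : Prop :=
  ∃ W : Set α, MeasurableSet W ∧ ZWandering Uz W ∧ σ ((⋃ j : ℤ, Uz j '' W)ᶜ) = 0

/-- Ergodicity of a (not necessarily finite) invariant measure: every invariant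
measurable set is null or conull. -/
def MeasErgodic {α : Type*} [MeasurableSpace α] (σ : Measure α) (U : α → α) : Prop :=
  ∀ A : Set α, MeasurableSet A → U ⁻¹' A = A → σ A = 0 ∨ σ Aᶜ = 0

/-- `Icc a b` is an `n`-crossing for `x`: a maximal finite set of consecutive integers `j`
with `(T^{×ι})^j x ∈ Cₙ^ι`. -/
def IsCrossing (ι : Type) (n : ℕ) (x : ι → ChaconX) (a b : ℤ) : Prop :=
  a ≤ b ∧ (∀ j : ℤ, a ≤ j → j ≤ b → chaconTdZ ι j x ∈ chaconCd ι n) ∧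
    chaconTdZ ι (a - 1) x ∉ chaconCd ι n ∧ chaconTdZ ι (b + 1) x ∉ chaconCd ι n

/-- `n(x)`: the smallest `n ≥ 1` with `x ∈ Cₙ^ι`. -/
def chaconNOf (ι : Type) (x : ι → ChaconX) : ℕ :=
  if h : ∃ n : ℕ, 1 ≤ n ∧ x ∈ chaconCd ι n then Nat.find h else 0

/-- `B(τ)`: the points of `B` whose coordinate `i` lies in subcolumn `τ i` of tower `n`. -/
def chaconBoxTau (ι : Type) (n : ℕ) (B : Set (ι → ChaconX)) (τ : ι → ℕ) :
    Set (ι → ChaconX) :=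
  {x ∈ B | ∀ i, chaconTn n (x i) = τ i}

/-- The transition from the `n`-diagonal `D` to the `(n+1)`-diagonal `D'` is the central
one, i.e. `D' = D(1,…,1)`. -/
def CentralTransition (ι : Type) (n : ℕ) (D D' : Set (ι → ChaconX)) : Prop :=
  ∀ B : Set (ι → ChaconX), IsNBox ι n B → B ⊆ D →
    chaconBoxTau ι n B (fun _ => 1) ⊆ D'

/-- The `n`-diagonal containing a given set (junk value `∅` if there is none). -/
def diagOfBox (ι : Type) (n : ℕ) (B : Set (ι → ChaconX)) : Set (ι → ChaconX) :=
  if h : ∃ D, IsNDiagonal ι n D ∧ B ⊆ D then h.choose else ∅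

/-- `D(τ)`: the `(n+1)`-diagonal containing `B(τ)` for an `n`-box `B ⊆ D`. -/
def diagTau (ι : Type) (n : ℕ) (D : Set (ι → ChaconX)) (τ : ι → ℕ) : Set (ι → ChaconX) :=
  if h : ∃ B, IsNBox ι n B ∧ B ⊆ D then diagOfBox ι (n + 1) (chaconBoxTau ι n h.choose τ)
  else ∅

/-- A consistent family of diagonals `(Dₙ)_{n ≥ n₀}`. -/
def IsConsistentFamily (ι : Type) (n₀ : ℕ) (D : ℕ → Set (ι → ChaconX)) : Prop :=
  (∀ n, n₀ ≤ n → IsNDiagonal ι n (D n)) ∧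
    (chaconCd ι (n₀ - 1) ∩ ⋂ n, ⋂ (_ : n₀ ≤ n), D n).Nonempty ∧
    ∀ n, n₀ ≤ n → D (n + 1) ∩ chaconCd ι n ⊆ D n

/-- `x` is seen by the family of diagonals `(Dₙ)_{n ≥ n₀}`. -/
def SeenByFam (ι : Type) (n₀ : ℕ) (D : ℕ → Set (ι → ChaconX)) (x : ι → ChaconX) : Prop :=
  ∀ n, n₀ ≤ n → x ∉ chaconCd ι n ∨ x ∈ D n

/-- Graph joinings arising from powers of `T`:
`σ(A₁ × ⋯ × A_d) = α μ(T^{-k₁}A₁ ∩ ⋯ ∩ T^{-k_d}A_d)` for some `0 < α < ∞`. -/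
def IsGraphJoining (ι : Type) [Fintype ι] (σ : Measure (ι → ChaconX)) : Prop :=
  ∃ (α : ℝ≥0∞) (k : ι → ℤ), 0 < α ∧ α ≠ ⊤ ∧
    ∀ A : ι → Set ChaconX, (∀ i, MeasurableSet (A i)) →
      σ (Set.univ.pi A) = α * chaconMu (⋂ i, chaconTZ (k i) ⁻¹' A i)

/-- Ergodic components of `σ`: the nonzero boundedly finite `T^{×ι}`-invariant ergodic
measures, absolutely continuous with respect to `σ`, which appear in its ergodic
decomposition. -/
def IsErgodicComponent (ι : Type) [Fintype ι] (σ ρ : Measure (ι → ChaconX)) : Prop :=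
  ρ ≠ 0 ∧ BoundedlyFinite ρ ∧ ρ.map (chaconTd ι) = ρ ∧ MeasErgodic ρ (chaconTd ι) ∧ ρ ≪ σ

end

/-- Horizontal index of level `k` of tower `n`. -/
def chM : ℕ → ℕ → ℕ
  | 0, _ => 0
  | n + 1, k =>
      if k < chaconH n then 3 * chM n k
      else if k < 2 * chaconH n then 3 * chM n (k - chaconH n) + 1
      else if k = 2 * chaconH n then 3 * chaconH n
      else if k ≤ 3 * chaconH n then 3 * chM n (k - 2 * chaconH n - 1) + 2
      else k

/-- Offset of subcolumn `t` in the next tower. -/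
def chS (n t : ℕ) : ℕ := if t = 0 then 0 else if t = 1 then chaconH n else 2 * chaconH n + 1

/-- Level of the cell `c` of tower `n`. -/
def chP : ℕ → ℕ → ℕ
  | 0, _ => 0
  | n + 1, c =>
      if c < 3 * chaconH n then chP n (c / 3) + chS n (c % 3)
      else if c = 3 * chaconH n then 2 * chaconH n
      else c

lemma chaconH_succ (n : ℕ) : chaconH (n + 1) = 2 * (3 * chaconH n + 1) := rfl

lemma chaconH_pos (n : ℕ) : 1 ≤ chaconH n := by
  cases n with
  | zero => simp [chaconH]
  | succ n => rw [chaconH_succ]; omega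

lemma chaconH_ge (n : ℕ) : 6 ^ n ≤ chaconH n := by
  induction n with
  | zero => simp [chaconH]
  | succ n ih => rw [chaconH_succ, pow_succ]; omega

lemma chM_succ (n k : ℕ) : chM (n + 1) k =
      if k < chaconH n then 3 * chM n k
      else if k < 2 * chaconH n then 3 * chM n (k - chaconH n) + 1
      else if k = 2 * chaconH n then 3 * chaconH n
      else if k ≤ 3 * chaconH n then 3 * chM n (k - 2 * chaconH n - 1) + 2
      else k := rfl

lemma chP_succ (n c : ℕ) : chP (n + 1) c =
      if c < 3 * chaconH n then chP n (c / 3) + chS n (c % 3)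
      else if c = 3 * chaconH n then 2 * chaconH n
      else c := rfl

lemma chaconL_eq (n k : ℕ) : chaconL n k = (chM n k : ℝ) * (3 : ℝ)⁻¹ ^ n := by
  induction n generalizing k with
  | zero => simp [chaconL, chM]
  | succ n ih =>
    rw [chaconL, chM_succ]
    split_ifs
    · rw [ih]; push_cast; ring
    · rw [ih]; push_cast; ring
    · push_cast; ring
    · rw [ih]; push_cast; ring
    · ring

lemma chM_lt {n k : ℕ} (hk : k < chaconH n) : chM n k < chaconH n := by
  induction n generalizing k with
  | zero => simp [chM, chaconH]
  | succ n ih =>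
    have h0 := chaconH_succ n
    rw [chM_succ]
    split_ifs with h1 h2 h3 h4
    · have := ih h1; omega
    · have := @ih (k - chaconH n) (by omega); omega
    · omega
    · have := @ih (k - 2 * chaconH n - 1) (by omega); omega
    · omega

lemma chP_lt {n c : ℕ} (hk : c < chaconH n) : chP n c < chaconH n := by
  induction n generalizing c with
  | zero => simp [chP, chaconH]
  | succ n ih =>
    have h0 := chaconH_succ n
    rw [chP_succ]
    split_ifs with h1 h2
    · have := @ih (c / 3) (by omega)
      unfold chS; split_ifs <;> omega
    · omega
    · omega

lemma chM_add {n k t : ℕ} (hk : k < chaconH n) (ht : t < 3) :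
    chM (n + 1) (k + chS n t) = 3 * chM n k + t := by
  have h0 := chaconH_pos n
  rw [chM_succ]
  unfold chS
  interval_cases t
  · simp [hk]
  · have e : k + chaconH n - chaconH n = k := by omega
    simp [e]; omega
  · have e : k + (2 * chaconH n + 1) - 2 * chaconH n - 1 = k := by omega
    simp only [show ¬ ((2:ℕ) = 0) by omega, show ¬ ((2:ℕ) = 1) by omega, if_false, e]
    rw [if_neg (by omega), if_neg (by omega), if_neg (by omega), if_pos (by omega)]

lemma chM_chP {n c : ℕ} (hc : c < chaconH n) : chM n (chP n c) = c := by
  induction n generalizing c with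
  | zero => simp [chaconH] at hc; simp [chM, hc]
  | succ n ih =>
    have h0 := chaconH_succ n
    have h1 := chaconH_pos n
    rw [chP_succ]
    split_ifs with h1 h2
    · rw [chM_add (chP_lt (by omega)) (by omega), ih (by omega)]; omega
    · rw [chM_succ, if_neg (by omega), if_neg (by omega), if_pos rfl, h2]
    · rw [chM_succ, if_neg (by omega), if_neg (by omega), if_neg (by omega), if_neg (by omega)]

lemma chP_chM {n k : ℕ} (hk : k < chaconH n) : chP n (chM n k) = k := by
  have hs : ∀ c ∈ Finset.range (chaconH n), chP n c ∈ Finset.range (chaconH n) := by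
    intro c hc; rw [Finset.mem_range] at *; exact chP_lt hc
  have hinj : Set.InjOn (chP n) (Finset.range (chaconH n) : Set ℕ) := by
    intro a ha b hb hab
    simp only [Finset.coe_range, Set.mem_Iio] at ha hb
    rw [← chM_chP ha, ← chM_chP hb, hab]
  have := Finset.surj_on_of_inj_on_of_card_le (s := Finset.range (chaconH n))
    (t := Finset.range (chaconH n)) (fun a _ => chP n a) hs
    (fun a b ha hb hab => hinj (by simpa using ha) (by simpa using hb) hab) le_rfl k (by simpa using hk)
  obtain ⟨c, hc, e⟩ := this
  rw [Finset.mem_range] at hc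
  rw [e, chM_chP hc]

/-- Triadic cell of `x`. -/
noncomputable def cel (n : ℕ) (x : ChaconX) : ℕ := ⌊(x : ℝ) * 3 ^ n⌋₊

lemma cel_nonneg (n : ℕ) (x : ChaconX) : 0 ≤ (x : ℝ) * 3 ^ n :=
  mul_nonneg x.2 (by positivity)

lemma cel_succ (n : ℕ) (x : ChaconX) : cel (n + 1) x / 3 = cel n x := by
  unfold cel
  have := Nat.floor_div_natCast ((x : ℝ) * 3 ^ (n + 1)) 3
  rw [← this]
  congr 1
  push_cast; rw [pow_succ]; ring

lemma cel_add (n p : ℕ) (x : ChaconX) : cel (n + p) x / 3 ^ p = cel n x := by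
  induction p with
  | zero => simp
  | succ p ih => rw [pow_succ', ← Nat.div_div_eq_div_mul, ← add_assoc, cel_succ, ih]

lemma mem_level_iff {n k : ℕ} (x : ChaconX) :
    (x : ℝ) ∈ chaconLevel n k ↔ cel n x = chM n k := by
  unfold chaconLevel cel
  rw [Nat.floor_eq_iff (cel_nonneg n x), chaconL_eq, Set.mem_Ico]
  have h3 : (0 : ℝ) < 3 ^ n := by positivity
  rw [inv_pow, ← div_eq_mul_inv, div_le_iff₀ h3, ← one_div, ← add_div, lt_div_iff₀ h3]

/-- Level of `x` in tower `n`. -/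
noncomputable def lev (n : ℕ) (x : ChaconX) : ℕ := chP n (cel n x)

lemma mem_level_iff' {n k : ℕ} (x : ChaconX) (hk : k < chaconH n) :
    (x : ℝ) ∈ chaconLevel n k ↔ cel n x < chaconH n ∧ lev n x = k := by
  rw [mem_level_iff]
  constructor
  · intro h
    exact ⟨h ▸ chM_lt hk, by rw [lev, h, chP_chM hk]⟩
  · rintro ⟨h, rfl⟩
    rw [lev, chM_chP h]

lemma lev_lt {n : ℕ} {x : ChaconX} (h : cel n x < chaconH n) : lev n x < chaconH n := chP_lt h

lemma cel_lt_succ {n : ℕ} {x : ChaconX} (h : cel n x < chaconH n) :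
    cel (n + 1) x < 3 * chaconH n := by
  have := cel_succ n x
  omega

lemma cel_lt_succ' {n : ℕ} {x : ChaconX} (h : cel n x < chaconH n) :
    cel (n + 1) x < chaconH (n + 1) := by
  have := cel_lt_succ h
  rw [chaconH_succ]; omega

lemma cel_lt_mono {n p : ℕ} {x : ChaconX} (h : cel n x < chaconH n) (hp : n ≤ p) :
    cel p x < chaconH p := by
  induction p, hp using Nat.le_induction with
  | base => exact h
  | succ p _ ih => exact cel_lt_succ' ih

lemma lev_succ {n : ℕ} {x : ChaconX} (h : cel n x < chaconH n) :
    lev (n + 1) x = lev n x + chS n (cel (n + 1) x % 3) := by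
  rw [lev, chP_succ, if_pos (cel_lt_succ h), cel_succ, lev]

lemma chS_le (n t : ℕ) : chS n t ≤ 2 * chaconH n + 1 := by
  unfold chS; split_ifs <;> omega

lemma mem_C_iff {n : ℕ} {x : ChaconX} :
    x ∈ chaconC n ↔ cel n x < chaconH n ∧ lev n x < chaconH n / 2 := by
  constructor
  · rintro ⟨k, hk, hx⟩
    rw [mem_level_iff' x (by omega)] at hx
    exact ⟨hx.1, by omega⟩
  · rintro ⟨h, h'⟩
    exact ⟨lev n x, h', (mem_level_iff' x (by omega)).2 ⟨h, rfl⟩⟩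

lemma mem_C_succ {n : ℕ} {x : ChaconX} (h : cel n x < chaconH n) : x ∈ chaconC (n + 1) := by
  rw [mem_C_iff]
  refine ⟨cel_lt_succ' h, ?_⟩
  have := chS_le n (cel (n + 1) x % 3)
  have := lev_lt h
  rw [lev_succ h, chaconH_succ]; omega

lemma C_mono {n p : ℕ} {x : ChaconX} (h : x ∈ chaconC n) (hp : n ≤ p) : x ∈ chaconC p := by
  induction p, hp using Nat.le_induction with
  | base => exact h
  | succ p _ ih => exact mem_C_succ (mem_C_iff.1 ih).1

lemma exists_cel_lt (x : ChaconX) : ∃ n, cel n x < chaconH n := by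
  obtain ⟨n, hn⟩ := pow_unbounded_of_one_lt (x : ℝ) (one_lt_two)
  refine ⟨n, ?_⟩
  unfold cel
  rw [Nat.floor_lt (cel_nonneg n x)]
  have h1 : ((6 ^ n : ℕ) : ℝ) ≤ chaconH n := by exact_mod_cast chaconH_ge n
  refine lt_of_lt_of_le ?_ h1
  push_cast
  rw [show (6 : ℝ) = 2 * 3 by norm_num, mul_pow]
  exact mul_lt_mul_of_pos_right hn (by positivity)

lemma L_step {n k p : ℕ} {x : ChaconX} (hk : k + 1 < chaconH n) (hc : cel n x < chaconH n)
    (hl : lev n x = k) (hp : n ≤ p) :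
    lev p x + 1 < chaconH p ∧
    chaconL p (lev p x + 1) - chaconL p (lev p x) = chaconL n (k + 1) - chaconL n k := by
  induction p, hp using Nat.le_induction with
  | base => rw [hl]; exact ⟨hk, rfl⟩
  | succ p hp ih =>
    obtain ⟨h1, h2⟩ := ih
    have hc' := cel_lt_mono hc hp
    have ht : cel (p + 1) x % 3 < 3 := Nat.mod_lt _ (by norm_num)
    have hS := chS_le p (cel (p + 1) x % 3)
    rw [← h2, lev_succ hc']
    refine ⟨by rw [chaconH_succ]; omega, ?_⟩
    rw [show lev p x + chS p (cel (p + 1) x % 3) + 1 = (lev p x + 1) + chS p (cel (p + 1) x % 3) by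
      ring]
    simp only [chaconL_eq]
    rw [chM_add h1 ht, chM_add (by omega) ht]
    push_cast; ring

lemma T0_eq {n : ℕ} {x : ChaconX} (hk : lev n x + 1 < chaconH n) (hc : cel n x < chaconH n) :
    chaconT0 x = x - chaconL n (lev n x) + chaconL n (lev n x + 1) := by
  unfold chaconT0
  have hex : ∃ p : ℕ × ℕ, p.2 + 1 < chaconH p.1 ∧ (x : ℝ) ∈ chaconLevel p.1 p.2 :=
    ⟨(n, lev n x), hk, (mem_level_iff' x (show lev n x < chaconH n by omega)).2 ⟨hc, rfl⟩⟩
  rw [dif_pos hex]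
  obtain ⟨h1, h2⟩ := hex.choose_spec
  generalize hex.choose = q at *
  rw [mem_level_iff' x (by omega)] at h2
  have a := (L_step h1 h2.1 h2.2 (le_max_left q.1 n)).2
  have b := (L_step hk hc rfl (le_max_right q.1 n)).2
  linarith

lemma chaconL_nonneg (n k : ℕ) : 0 ≤ chaconL n k := by rw [chaconL_eq]; positivity

lemma T_eq {n : ℕ} {x : ChaconX} (hk : lev n x + 1 < chaconH n) (hc : cel n x < chaconH n) :
    (chaconT x : ℝ) = x - chaconL n (lev n x) + chaconL n (lev n x + 1) := by
  have h := ((mem_level_iff' x (by omega)).2 ⟨hc, rfl⟩ : (x : ℝ) ∈ chaconLevel n (lev n x)).1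
  have := chaconL_nonneg n (lev n x + 1)
  simp only [chaconT]
  rw [T0_eq hk hc, max_eq_right]
  linarith

lemma T_lev {n : ℕ} {x : ChaconX} (hk : lev n x + 1 < chaconH n) (hc : cel n x < chaconH n) :
    cel n (chaconT x) < chaconH n ∧ lev n (chaconT x) = lev n x + 1 := by
  rw [← mem_level_iff' _ hk]
  have h := ((mem_level_iff' x (by omega)).2 ⟨hc, rfl⟩ : (x : ℝ) ∈ chaconLevel n (lev n x))
  unfold chaconLevel at *
  rw [T_eq hk hc]
  rw [Set.mem_Ico] at *
  constructor <;> linarith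

lemma T_iter_lev {n : ℕ} {x : ChaconX} (j : ℕ) (hk : lev n x + j < chaconH n)
    (hc : cel n x < chaconH n) :
    cel n (chaconT^[j] x) < chaconH n ∧ lev n (chaconT^[j] x) = lev n x + j := by
  induction j with
  | zero => exact ⟨hc, rfl⟩
  | succ j ih =>
    obtain ⟨h1, h2⟩ := ih (by omega)
    rw [Function.iterate_succ_apply']
    have := T_lev (n := n) (x := chaconT^[j] x) (by omega) h1
    exact ⟨this.1, by omega⟩

lemma cel_eq_of_lev {n : ℕ} {x y : ChaconX} (hx : cel n x < chaconH n) (hy : cel n y < chaconH n)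
    (h : lev n x = lev n y) : cel n x = cel n y := by
  rw [← chM_chP hx, ← chM_chP hy]; unfold lev at h; rw [h]

lemma nontop_of_C {n : ℕ} {x : ChaconX} (h : x ∈ chaconC n) :
    lev n x + 1 < chaconH n ∨ n = 0 := by
  rw [mem_C_iff] at h
  cases n with
  | zero => right; rfl
  | succ n => left; rw [chaconH_succ] at *; omega

lemma exists_C (x : ChaconX) : ∃ n, x ∈ chaconC n := by
  obtain ⟨n, hn⟩ := exists_cel_lt x
  exact ⟨n + 1, mem_C_succ hn⟩

lemma C_zero (x : ChaconX) : x ∉ chaconC 0 := by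
  rw [mem_C_iff]; simp [chaconH]

lemma nontop {n : ℕ} {x : ChaconX} (h : x ∈ chaconC n) : lev n x + 1 < chaconH n := by
  rcases nontop_of_C h with h' | rfl
  · exact h'
  · exact absurd h (C_zero x)

lemma T_inj : Function.Injective chaconT := by
  intro x y hxy
  obtain ⟨n, hn⟩ := exists_C x
  obtain ⟨m, hm⟩ := exists_C y
  have hx := C_mono hn (le_max_left n m)
  have hy := C_mono hm (le_max_right n m)
  set N := max n m
  have hcx := (mem_C_iff.1 hx).1
  have hcy := (mem_C_iff.1 hy).1
  have a := T_lev (nontop hx) hcx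
  have b := T_lev (nontop hy) hcy
  have e : lev N x = lev N y := by rw [hxy] at a; omega
  have a' := T_eq (nontop hx) hcx
  have b' := T_eq (nontop hy) hcy
  rw [hxy, b', e] at a'
  apply Subtype.ext
  linarith

/-- The level `k` of tower `n`, in `X`. -/
def LevX (n k : ℕ) : Set ChaconX := {x | cel n x < chaconH n ∧ lev n x = k}

lemma T_preimage {n k : ℕ} (hk : k + 1 < chaconH n) :
    chaconT ⁻¹' (LevX n (k + 1)) = LevX n k := by
  ext x
  constructor
  · intro hx
    have hx' := (mem_level_iff' (chaconT x) hk).2 hx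
    unfold chaconLevel at hx'
    have hp := chaconL_nonneg n k
    have hmem : (chaconT x : ℝ) - chaconL n (k + 1) + chaconL n k ∈ chaconLevel n k := by
      unfold chaconLevel
      rw [Set.mem_Ico] at *
      constructor <;> linarith
    have h0 : (0:ℝ) ≤ (chaconT x : ℝ) - chaconL n (k + 1) + chaconL n k :=
      hp.trans hmem.1
    let y : ChaconX := ⟨_, h0⟩
    have hy : cel n y < chaconH n ∧ lev n y = k := (mem_level_iff' y (by omega)).1 hmem
    have : chaconT y = chaconT x := by
      apply Subtype.ext
      rw [T_eq (by rw [hy.2]; exact hk) hy.1, hy.2]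
      show (chaconT x : ℝ) - chaconL n (k + 1) + chaconL n k - _ + _ = _
      ring
    rw [← T_inj this]
    exact hy
  · rintro ⟨h1, rfl⟩
    exact T_lev hk h1

lemma eq_of_cel {x y : ChaconX} {N : ℕ} (h : ∀ n, N ≤ n → cel n x = cel n y) : x = y := by
  apply Subtype.ext
  by_contra hne
  have hpos : 0 < |(x : ℝ) - y| := abs_pos.2 (sub_ne_zero.2 hne)
  obtain ⟨n, hn⟩ := pow_unbounded_of_one_lt (1 / |(x : ℝ) - y|) (by norm_num : (1:ℝ) < 3)
  have hn' : 1 / |(x : ℝ) - y| < 3 ^ (n + N) :=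
    lt_of_lt_of_le hn (pow_le_pow_right₀ (by norm_num) (by omega))
  have hc := h (n + N) (by omega)
  unfold cel at hc
  have a := Nat.floor_le (cel_nonneg (n + N) x)
  have b := Nat.lt_floor_add_one ((x : ℝ) * 3 ^ (n + N))
  have a' := Nat.floor_le (cel_nonneg (n + N) y)
  have b' := Nat.lt_floor_add_one ((y : ℝ) * 3 ^ (n + N))
  rw [hc] at a b
  have : |(x : ℝ) * 3 ^ (n + N) - y * 3 ^ (n + N)| < 1 := by
    rw [abs_lt]; constructor <;> linarith
  rw [← sub_mul, abs_mul, abs_of_pos (by positivity : (0:ℝ) < 3 ^ (n + N))] at this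
  rw [div_lt_iff₀ hpos] at hn'
  linarith
lemma measurable_cel (n : ℕ) : Measurable (cel n) := by
  unfold cel
  exact Nat.measurable_floor.comp (measurable_subtype_coe.mul_const _)

lemma measurable_lev (n : ℕ) : Measurable (lev n) :=
  (measurable_of_countable (chP n)).comp (measurable_cel n)

lemma measurableSet_LevX (n k : ℕ) : MeasurableSet (LevX n k) := by
  have h1 : MeasurableSet (cel n ⁻¹' {c | c < chaconH n}) := measurable_cel n (by measurability)
  have h2 : MeasurableSet (lev n ⁻¹' {k}) := measurable_lev n (by measurability)
  exact h1.inter h2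

lemma measurable_T : Measurable chaconT := by
  intro s hs
  let f : ℕ × ℕ → ChaconX → ChaconX := fun p x =>
    ⟨max 0 ((x : ℝ) - chaconL p.1 p.2 + chaconL p.1 (p.2 + 1)), Set.mem_Ici.mpr (le_max_left 0 _)⟩
  have hf : ∀ p, Measurable (f p) := fun p => by
    apply Measurable.subtype_mk
    exact measurable_const.max ((measurable_subtype_coe.sub_const _).add_const _)
  have : chaconT ⁻¹' s = ⋃ p : ℕ × ℕ, ⋃ (_ : p.2 + 1 < chaconH p.1), LevX p.1 p.2 ∩ f p ⁻¹' s := by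
    ext x
    simp only [Set.mem_iUnion, Set.mem_inter_iff, Set.mem_preimage, exists_prop]
    have key : ∀ p : ℕ × ℕ, p.2 + 1 < chaconH p.1 → x ∈ LevX p.1 p.2 → chaconT x = f p x := by
      rintro ⟨n, k⟩ hp ⟨h1, h2⟩
      simp only at hp h1 h2
      subst h2
      apply Subtype.ext
      simp only [f]
      rw [← T_eq hp h1, max_eq_right]
      exact (chaconT x).2
    constructor
    · intro hx
      obtain ⟨n, hn⟩ := exists_C x
      refine ⟨(n, lev n x), nontop hn, ⟨(mem_C_iff.1 hn).1, rfl⟩, ?_⟩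
      rw [← key (n, lev n x) (nontop hn) ⟨(mem_C_iff.1 hn).1, rfl⟩]
      exact hx
    · rintro ⟨p, hp, h1, h2⟩
      rw [key p hp h1]; exact h2
  rw [this]
  exact MeasurableSet.iUnion fun p => MeasurableSet.iUnion fun _ =>
    (measurableSet_LevX _ _).inter (hf p hs)

/-- A triadic cell. -/
def cell (n c : ℕ) : Set ChaconX := {x | cel n x = c}

lemma measurableSet_cell (n c : ℕ) : MeasurableSet (cell n c) :=
  measurable_cel n (measurableSet_singleton c)

lemma LevX_eq {n k : ℕ} (hk : k < chaconH n) : LevX n k = cell n (chM n k) := by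
  ext x
  rw [cell, Set.mem_ofPred_eq, ← mem_level_iff, mem_level_iff' x hk, LevX, Set.mem_ofPred_eq]

lemma mu_cell (n c : ℕ) : chaconMu (cell n c) = (3 : ℝ≥0∞)⁻¹ ^ n := by
  unfold chaconMu
  rw [(MeasurableEmbedding.subtype_coe measurableSet_Ici).comap_apply]
  have h3 : (0 : ℝ) < 3 ^ n := by positivity
  have : (Subtype.val '' cell n c : Set ℝ) = Ico ((c : ℝ) / 3 ^ n) ((c + 1) / 3 ^ n) := by
    ext y
    simp only [Set.mem_image, Set.mem_Ico]
    constructor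
    · rintro ⟨x, hx, rfl⟩
      unfold cell cel at hx
      rw [Set.mem_ofPred_eq, Nat.floor_eq_iff (cel_nonneg n x)] at hx
      rw [div_le_iff₀ h3, lt_div_iff₀ h3]; exact hx
    · rintro ⟨h1, h2⟩
      have h0 : (0 : ℝ) ≤ y := le_trans (by positivity) h1
      refine ⟨⟨y, h0⟩, ?_, rfl⟩
      unfold cell cel
      rw [Set.mem_ofPred_eq, Nat.floor_eq_iff (cel_nonneg n _)]
      rw [div_le_iff₀ h3] at h1; rw [lt_div_iff₀ h3] at h2
      exact ⟨h1, h2⟩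
  rw [this, Real.volume_Ico, add_div, add_sub_cancel_left, one_div, ← inv_pow,
    ENNReal.ofReal_pow (by positivity), ENNReal.ofReal_inv_of_pos (by norm_num)]
  norm_num

/-- Cells satisfying the digit constraints. -/
noncomputable def Gd (M : ℕ) (a : ℕ → ℕ) (S : Set ℕ) : ℕ → Finset ℕ
  | 0 => Finset.range M
  | n + 1 => if n ∈ S then (Gd M a S n).image (fun c => 3 * c + a n)
      else (Gd M a S n ×ˢ Finset.range 3).image (fun c => 3 * c.1 + c.2)

lemma Gd_mem (M : ℕ) (a : ℕ → ℕ) (S : Set ℕ) (n : ℕ) {x : ChaconX} (h0 : cel 0 x < M)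
    (h : ∀ n ∈ S, cel (n + 1) x % 3 = a n) : cel n x ∈ Gd M a S n := by
  induction n with
  | zero => simpa [Gd] using h0
  | succ n ih =>
    have hs := cel_succ n x
    rw [Gd]
    split_ifs with hn
    · have := h n hn
      exact Finset.mem_image.2 ⟨_, ih, by omega⟩
    · refine Finset.mem_image.2 ⟨(cel n x, cel (n + 1) x % 3), ?_, by simp only; omega⟩
      rw [Finset.mem_product]
      exact ⟨ih, Finset.mem_range.2 (Nat.mod_lt _ (by norm_num))⟩

lemma Gd_card_in (M : ℕ) (a : ℕ → ℕ) (S : Set ℕ) {n : ℕ} (hn : n ∈ S) :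
    (Gd M a S (n + 1)).card ≤ (Gd M a S n).card := by
  rw [Gd, if_pos hn]; exact Finset.card_image_le

lemma Gd_card (M : ℕ) (a : ℕ → ℕ) (S : Set ℕ) (n : ℕ) :
    (Gd M a S (n + 1)).card ≤ (Gd M a S n).card * 3 := by
  by_cases hn : n ∈ S
  · exact (Gd_card_in M a S hn).trans (by omega)
  · rw [Gd, if_neg hn]
    refine Finset.card_image_le.trans ?_
    rw [Finset.card_product, Finset.card_range]

lemma null_digits_aux (M : ℕ) (a : ℕ → ℕ) (S : Set ℕ) (hS : S.Infinite) :
    chaconMu {x | cel 0 x < M ∧ ∀ n ∈ S, cel (n + 1) x % 3 = a n} = 0 := by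
  set Z := {x | cel 0 x < M ∧ ∀ n ∈ S, cel (n + 1) x % 3 = a n}
  let f : ℕ → ℝ≥0∞ := fun n => ((Gd M a S n).card : ℝ≥0∞) * (3 : ℝ≥0∞)⁻¹ ^ n
  have hZ : ∀ n, chaconMu Z ≤ f n := by
    intro n
    have hsub : Z ⊆ ⋃ c ∈ Gd M a S n, cell n c := by
      rintro x ⟨h0, h1⟩
      simp only [Set.mem_iUnion]
      exact ⟨_, Gd_mem M a S n h0 h1, rfl⟩
    refine (measure_mono hsub).trans ((measure_biUnion_finset_le _ _).trans ?_)
    simp only [mu_cell, Finset.sum_const, nsmul_eq_mul]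
    exact le_rfl
  have h33 : (3 : ℝ≥0∞) * 3⁻¹ = 1 := ENNReal.mul_inv_cancel (by norm_num) (by norm_num)
  have hf1 : Antitone f := by
    refine antitone_nat_of_succ_le fun n => ?_
    simp only [f]
    calc ((Gd M a S (n + 1)).card : ℝ≥0∞) * (3 : ℝ≥0∞)⁻¹ ^ (n + 1)
        ≤ (((Gd M a S n).card * 3 : ℕ) : ℝ≥0∞) * (3 : ℝ≥0∞)⁻¹ ^ (n + 1) := by
          gcongr; exact Gd_card M a S n
      _ = ((Gd M a S n).card : ℝ≥0∞) * (3 : ℝ≥0∞)⁻¹ ^ n * (3 * 3⁻¹) := by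
          push_cast; ring
      _ = _ := by rw [h33, mul_one]
  have hf2 : ∀ n ∈ S, f (n + 1) ≤ f n * 3⁻¹ := by
    intro n hn
    simp only [f]
    rw [pow_succ, ← mul_assoc]
    have h := Gd_card_in M a S hn
    gcongr
  have hj : ∀ j : ℕ, ∃ n, f n ≤ M * (3 : ℝ≥0∞)⁻¹ ^ j := by
    intro j
    induction j with
    | zero => exact ⟨0, by simp [f, Gd]⟩
    | succ j ih =>
      obtain ⟨n, hn⟩ := ih
      obtain ⟨p, hp, hnp⟩ := hS.exists_gt n
      refine ⟨p + 1, (hf2 p hp).trans ?_⟩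
      rw [pow_succ, ← mul_assoc]
      gcongr
      exact (hf1 hnp.le).trans hn
  have hlim : Filter.Tendsto (fun j : ℕ => (M : ℝ≥0∞) * (3 : ℝ≥0∞)⁻¹ ^ j) Filter.atTop
      (nhds ((M : ℝ≥0∞) * 0)) := by
    apply ENNReal.Tendsto.const_mul
    · apply ENNReal.tendsto_pow_atTop_nhds_zero_of_lt_one
      rw [ENNReal.inv_lt_one]; norm_num
    · right; exact ENNReal.natCast_ne_top M
  rw [mul_zero] at hlim
  refine le_antisymm (ge_of_tendsto' hlim fun j => ?_) zero_le
  obtain ⟨n, hn⟩ := hj j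
  exact (hZ n).trans hn

lemma null_digits (a : ℕ → ℕ) (S : Set ℕ) (hS : S.Infinite) :
    chaconMu {x | ∀ n ∈ S, cel (n + 1) x % 3 = a n} = 0 := by
  refine measure_mono_null (t := ⋃ M : ℕ, {x | cel 0 x < M ∧ ∀ n ∈ S, cel (n + 1) x % 3 = a n})
    ?_ (measure_iUnion_null fun M => null_digits_aux M a S hS)
  intro x hx
  exact Set.mem_iUnion.2 ⟨cel 0 x + 1, Nat.lt_succ_self _, hx⟩

lemma chaconTZ_nat (j : ℕ) : chaconTZ (j : ℤ) = chaconT^[j] := by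
  unfold chaconTZ
  rw [if_pos (by omega)]; simp

lemma diag_struct {ι : Type} {n : ℕ} {D : Set (ι → ChaconX)} (h : IsNDiagonal ι n D) :
    ∃ κ : ι → ℕ, ∀ x ∈ D, x ∈ chaconCd ι n ∧ ∃ j, ∀ i, lev n (x i) = κ i + j := by
  obtain ⟨B, l, hB, -, -, rfl⟩ := h
  have box : ∀ {B' : Set (ι → ChaconX)}, IsNBox ι n B' → B' ⊆ chaconCd ι n := by
    rintro B' ⟨k, hk, rfl⟩ x hx i
    exact ⟨k i, hk i, hx i⟩
  have hB0 := hB 0 (Nat.zero_le _)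
  have e0 : chaconTdZ ι ((0 : ℕ) : ℤ) '' B = B := by
    have : chaconTdZ ι ((0 : ℕ) : ℤ) = id := by
      funext x i; simp only [chaconTdZ]; rw [chaconTZ_nat]; rfl
    rw [this, Set.image_id]
  rw [e0] at hB0
  obtain ⟨κ, hκ, hBe⟩ := hB0
  refine ⟨κ, ?_⟩
  intro x hx
  simp only [Set.mem_iUnion, Finset.mem_range] at hx
  obtain ⟨j, hj, y, hy, rfl⟩ := hx
  have hC : ∀ j' ≤ l, chaconTdZ ι (j' : ℤ) y ∈ chaconCd ι n := fun j' hj' =>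
    box (hB j' hj') ⟨y, hy, rfl⟩
  refine ⟨hC j (by omega), j, fun i => ?_⟩
  have hyi : cel n (y i) < chaconH n ∧ lev n (y i) = κ i := by
    rw [hBe] at hy
    have := hκ i
    exact (mem_level_iff' _ (by omega)).1 (hy i)
  have main : ∀ j' ≤ l, lev n (chaconT^[j'] (y i)) = κ i + j' := by
    intro j'
    induction j' with
    | zero => intro _; exact hyi.2
    | succ j' ih =>
      intro hj'
      have e := ih (by omega)
      have c := hC j' (by omega) i
      simp only [chaconTdZ] at c
      rw [chaconTZ_nat] at c
      rw [Function.iterate_succ_apply', (T_lev (nontop c) (mem_C_iff.1 c).1).2, e]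
      ring
  simp only [chaconTdZ]
  rw [chaconTZ_nat]
  exact main j (by omega)

lemma digit_unique (n : ℕ) (e : ℤ) (he : e ≠ 0) :
    ∃ a : ℕ, ∀ t0 t : ℕ, t0 < 3 → t < 3 → (chS n t : ℤ) - chS n t0 = e → t0 = a := by
  by_cases h : ∃ t0 t : ℕ, t0 < 3 ∧ t < 3 ∧ (chS n t : ℤ) - chS n t0 = e
  · obtain ⟨a, b, ha, hb, hab⟩ := h
    refine ⟨a, fun t0 t h0 ht h => ?_⟩
    have := chaconH_pos n
    unfold chS at *
    interval_cases a <;> interval_cases b <;> interval_cases t0 <;> interval_cases t <;>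
      simp at * <;> omega
  · push Not at h
    exact ⟨0, fun t0 t h0 ht h' => absurd h' (h t0 t h0 ht)⟩

lemma cell_split (n c : ℕ) :
    cell n c = cell (n + 1) (3 * c) ∪ (cell (n + 1) (3 * c + 1) ∪ cell (n + 1) (3 * c + 2)) := by
  ext x
  have := cel_succ n x
  simp only [cell, Set.mem_union, Set.mem_ofPred_eq]
  omega

lemma cell_disj (n : ℕ) {c c' : ℕ} (h : c ≠ c') : Disjoint (cell n c) (cell n c') := by
  rw [Set.disjoint_left]
  intro x h1 h2
  exact h (h1.symm.trans h2)

lemma measure_cell_split (ν : Measure ChaconX) (n c : ℕ) :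
    ν (cell n c) = ν (cell (n + 1) (3 * c)) + (ν (cell (n + 1) (3 * c + 1)) +
      ν (cell (n + 1) (3 * c + 2))) := by
  rw [cell_split, measure_union _ ((measurableSet_cell _ _).union (measurableSet_cell _ _)),
    measure_union _ (measurableSet_cell _ _)]
  · exact cell_disj _ (by omega)
  · rw [Set.disjoint_union_right]
    exact ⟨cell_disj _ (by omega), cell_disj _ (by omega)⟩

/-- Uniqueness of the invariant measure. -/
lemma invariant_unique (ν : Measure ChaconX)
    (hinv : ∀ s, MeasurableSet s → ν (chaconT ⁻¹' s) = ν s) (n₁ : ℕ)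
    (hfin : ν (cell n₁ 0) < ⊤) : ν (cell 0 0) ≠ ⊤ ∧ ν = ν (cell 0 0) • chaconMu := by
  have h33 : (3 : ℝ≥0∞) * 3⁻¹ = 1 := ENNReal.mul_inv_cancel (by norm_num) (by norm_num)
  have hlev : ∀ n k, k < chaconH n → ν (LevX n k) = ν (LevX n 0) := by
    intro n k
    induction k with
    | zero => intro _; rfl
    | succ k ih =>
      intro hk
      rw [← hinv _ (measurableSet_LevX n (k + 1)), T_preimage hk, ih (by omega)]
  have hcell : ∀ n c, c < chaconH n → ν (cell n c) = ν (cell n 0) := by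
    have : ∀ n c, c < chaconH n → ν (cell n c) = ν (LevX n 0) := by
      intro n c hc
      rw [← hlev n _ (chP_lt hc), LevX_eq (chP_lt hc), chM_chP hc]
    intro n c hc
    rw [this n c hc, this n 0 (chaconH_pos n)]
  have hw : ∀ n, ν (cell n 0) = 3 * ν (cell (n + 1) 0) := by
    intro n
    have := chaconH_pos n
    have h6 := chaconH_succ n
    rw [measure_cell_split, hcell (n + 1) (3 * 0 + 1) (by omega), hcell (n + 1) (3 * 0 + 2) (by omega),
      mul_zero]
    ring
  have hw0 : ∀ n, ν (cell n 0) = ν (cell 0 0) * 3⁻¹ ^ n := by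
    intro n
    induction n with
    | zero => simp
    | succ n ih =>
      rw [pow_succ, ← mul_assoc, ← ih, hw n, mul_comm (3 : ℝ≥0∞), mul_assoc, h33, mul_one]
  have hα : ν (cell 0 0) ≠ ⊤ := by
    intro h
    rw [hw0, h, ENNReal.top_mul] at hfin
    · exact absurd hfin (lt_irrefl _)
    · exact pow_ne_zero _ (by simp)
  refine ⟨hα, ?_⟩
  have hall : ∀ p n c, (c + 1) * 3 ^ p ≤ chaconH (n + p) → ν (cell n c) = ν (cell 0 0) * 3⁻¹ ^ n := by
    intro p
    induction p with
    | zero =>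
      intro n c h
      simp only [pow_zero, mul_one, add_zero] at h
      rw [hcell n c (by omega), hw0]
    | succ p ih =>
      intro n c h
      rw [pow_succ'] at h
      have hh : n + (p + 1) = n + 1 + p := by ring
      rw [hh] at h
      have hb : ∀ t < 3, (3 * c + t + 1) * 3 ^ p ≤ chaconH (n + 1 + p) := by
        intro t ht
        refine le_trans ?_ h
        rw [← mul_assoc]
        apply Nat.mul_le_mul_right
        omega
      rw [measure_cell_split, ih (n + 1) (3 * c) (hb 0 (by omega)), ih (n + 1) (3 * c + 1)
        (hb 1 (by omega)), ih (n + 1) (3 * c + 2) (hb 2 (by omega))]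
      rw [pow_succ]
      calc _ = ν (cell 0 0) * 3⁻¹ ^ n * (3 * 3⁻¹) := by ring
        _ = _ := by rw [h33, mul_one]
  have hall' : ∀ n c, ν (cell n c) = ν (cell 0 0) * 3⁻¹ ^ n := by
    intro n c
    refine hall (c + 1) n c ?_
    refine le_trans ?_ (chaconH_ge _)
    rw [show (6 : ℕ) = 2 * 3 by norm_num, mul_pow]
    apply Nat.mul_le_mul
    · exact (Nat.lt_two_pow_self).le.trans (Nat.pow_le_pow_right (by norm_num) (by omega))
    · exact Nat.pow_le_pow_right (by norm_num) (by omega)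
  let C : Set (Set ChaconX) := {s | ∃ n c, s = cell n c}
  have hgen : (inferInstance : MeasurableSpace ChaconX) = MeasurableSpace.generateFrom C := by
    apply le_antisymm
    · rw [BorelSpace.measurable_eq (α := ChaconX)]
      apply MeasurableSpace.generateFrom_le
      intro U hU
      have hUe : U = ⋃ p : ℕ × ℕ, ⋃ (_ : cell p.1 p.2 ⊆ U), cell p.1 p.2 := by
        ext x
        simp only [Set.mem_iUnion, exists_prop]
        constructor
        · intro hx
          obtain ⟨ε, hε, hb⟩ := Metric.isOpen_iff.1 (show IsOpen U from by simpa using hU) x hx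
          obtain ⟨n, hn⟩ := pow_unbounded_of_one_lt (1 / ε) (by norm_num : (1:ℝ) < 3)
          refine ⟨(n, cel n x), ?_, rfl⟩
          intro y hy
          apply hb
          simp only [cell, Set.mem_ofPred_eq] at hy
          unfold cel at hy
          have a := Nat.floor_le (cel_nonneg n x)
          have b := Nat.lt_floor_add_one ((x : ℝ) * 3 ^ n)
          have a' := Nat.floor_le (cel_nonneg n y)
          have b' := Nat.lt_floor_add_one ((y : ℝ) * 3 ^ n)
          rw [hy] at a' b'
          rw [Metric.mem_ball, Subtype.dist_eq, Real.dist_eq]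
          have : |(y : ℝ) * 3 ^ n - x * 3 ^ n| < 1 := by
            rw [abs_lt]; constructor <;> linarith
          have h3 : (0:ℝ) < 3 ^ n := by positivity
          rw [← sub_mul, abs_mul, abs_of_pos h3] at this
          rw [div_lt_iff₀ hε] at hn
          by_contra hcon
          push Not at hcon
          have := mul_le_mul_of_nonneg_right hcon h3.le
          linarith
        · rintro ⟨p, hp, hx⟩
          exact hp hx
      rw [hUe]
      refine MeasurableSet.iUnion fun p => MeasurableSet.iUnion fun _ => ?_
      exact MeasurableSpace.measurableSet_generateFrom ⟨p.1, p.2, rfl⟩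
    · apply MeasurableSpace.generateFrom_le
      rintro s ⟨n, c, rfl⟩
      exact measurableSet_cell n c
  have hpi : IsPiSystem C := by
    have aux : ∀ n c p c', (cell n c ∩ cell (n + p) c').Nonempty →
        cell n c ∩ cell (n + p) c' = cell (n + p) c' := by
      rintro n c p c' ⟨x, h1, h2⟩
      apply Set.inter_eq_right.2
      intro y hy
      simp only [cell, Set.mem_ofPred_eq] at *
      rw [← cel_add n p, hy, ← h2, cel_add, h1]
    rintro s ⟨n, c, rfl⟩ t ⟨n', c', rfl⟩ hne
    rcases le_total n n' with h | h
    · obtain ⟨p, rfl⟩ := Nat.exists_eq_add_of_le h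
      exact ⟨_, _, aux n c p c' hne⟩
    · obtain ⟨p, rfl⟩ := Nat.exists_eq_add_of_le h
      rw [Set.inter_comm] at hne ⊢
      exact ⟨_, _, aux n' c' p c hne⟩
  refine Measure.ext_of_generateFrom_of_iUnion C (fun c => cell 0 c) hgen hpi ?_ ?_ ?_ ?_
  · ext x; simp [cell]
  · intro c; exact ⟨0, c, rfl⟩
  · intro c; rw [hall']; simpa using hα
  · rintro s ⟨n, c, rfl⟩
    rw [hall', Measure.smul_apply, mu_cell, smul_eq_mul]
/-- **Proposition (positive measure of compatible points).**  Let `σ` be a diagonal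
measure on `X^d` (with charged diagonals `(Dₙ)_{n ≥ n₀}`).  If the set of `x₁ ∈ X` which
are compatible with `σ` (i.e. which are the first coordinate of some point seen by `σ`)
has positive Lebesgue measure, then `σ` is a graph joining arising from powers of `T`. -/
theorem chacon_compatible_positive (d n₀ : ℕ) (hd : 0 < d)
    (σ : Measure (Fin d → ChaconX)) (hbf : BoundedlyFinite σ)
    (hinv : σ.map (chaconTd (Fin d)) = σ)
    (D : ℕ → Set (Fin d → ChaconX))
    (hD : ∀ n, n₀ ≤ n → IsNDiagonal (Fin d) n (D n) ∧ σ (chaconCd (Fin d) n \ D n) = 0)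
    (hpos : ∀ n, n₀ ≤ n → 0 < σ (chaconCd (Fin d) n))
    (hcomp : 0 < chaconMu {x₁ : ChaconX |
      ∃ x : Fin d → ChaconX, x ⟨0, hd⟩ = x₁ ∧ SeenByFam (Fin d) n₀ D x}) :
    IsGraphJoining (Fin d) σ := by
  set z : Fin d := ⟨0, hd⟩ with hz
  have hκ : ∀ n, ∃ κ : Fin d → ℕ, n₀ ≤ n → ∀ x ∈ D n, x ∈ chaconCd (Fin d) n ∧
      ∃ j, ∀ i, lev n (x i) = κ i + j := by
    intro n
    by_cases hn : n₀ ≤ n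
    · obtain ⟨κ, h⟩ := diag_struct (hD n hn).1
      exact ⟨κ, fun _ => h⟩
    · exact ⟨0, fun h => absurd h hn⟩
  choose κ hκ using hκ
  let δ : ℕ → Fin d → ℤ := fun n i => (κ n i : ℤ) - κ n z
  let S : Set ℕ := {n | n₀ ≤ n ∧ δ (n + 1) ≠ δ n}
  have Cd_mono : ∀ {n p : ℕ} {x : Fin d → ChaconX}, x ∈ chaconCd (Fin d) n → n ≤ p →
      x ∈ chaconCd (Fin d) p := fun h hp i => C_mono (h i) hp
  have exists_Cd : ∀ x : Fin d → ChaconX, ∃ n, x ∈ chaconCd (Fin d) n := by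
    intro x
    choose m hm using fun i => exists_C (x i)
    exact ⟨Finset.univ.sup m, fun i => C_mono (hm i) (Finset.le_sup (Finset.mem_univ i))⟩
  have hSfin : S.Finite := by
    by_contra hSinf
    have hSinf : S.Infinite := hSinf
    have ha : ∀ n, ∃ a : ℕ, n ∈ S → ∀ x : Fin d → ChaconX, SeenByFam (Fin d) n₀ D x →
        x ∈ chaconCd (Fin d) n → cel (n + 1) (x z) % 3 = a := by
      intro n
      by_cases hn : n ∈ S
      · obtain ⟨hn0, hne⟩ := hn
        obtain ⟨i, hi⟩ := Function.ne_iff.1 hne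
        obtain ⟨a, ha⟩ := digit_unique n (δ (n + 1) i - δ n i) (sub_ne_zero.2 hi)
        refine ⟨a, fun _ x hx hxC => ?_⟩
        have h1 : x ∈ D n := (hx n hn0).resolve_left (fun h => h hxC)
        have h2 : x ∈ D (n + 1) := (hx (n + 1) (by omega)).resolve_left
          (fun h => h (Cd_mono hxC (Nat.le_succ n)))
        obtain ⟨-, j, hj⟩ := hκ n hn0 x h1
        obtain ⟨-, j', hj'⟩ := hκ (n + 1) (by omega) x h2
        refine ha _ (cel (n + 1) (x i) % 3) (Nat.mod_lt _ (by norm_num))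
          (Nat.mod_lt _ (by norm_num)) ?_
        have e1 := hj i
        have e2 := hj z
        have e3 := hj' i
        have e4 := hj' z
        rw [lev_succ (mem_C_iff.1 (hxC _)).1] at e3 e4
        simp only [δ]
        omega
      · exact ⟨0, fun h => absurd h hn⟩
    choose a ha using ha
    refine hcomp.ne' ?_
    refine measure_mono_null (t := ⋃ m : ℕ,
      {x₁ | ∀ n ∈ S \ Set.Iio m, cel (n + 1) x₁ % 3 = a n}) ?_ (measure_iUnion_null fun m =>
        null_digits a _ (hSinf.sdiff (Set.finite_Iio m)))
    rintro x₁ ⟨x, rfl, hx⟩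
    obtain ⟨m, hm⟩ := exists_Cd x
    refine Set.mem_iUnion.2 ⟨m, ?_⟩
    rintro n ⟨hn, hnm⟩
    exact ha n hn x hx (Cd_mono hm (by simpa using hnm))
  obtain ⟨N, hN0, hN⟩ : ∃ N, n₀ ≤ N ∧ ∀ n, N ≤ n → δ n = δ N := by
    obtain ⟨b, hb⟩ := hSfin.bddAbove
    refine ⟨max n₀ (b + 1), le_max_left _ _, fun n hn => ?_⟩
    induction n, hn using Nat.le_induction with
    | base => rfl
    | succ n hn ih =>
      rw [← ih]
      by_contra hne
      have : n ∈ S := ⟨(le_max_left _ _).trans hn, hne⟩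
      have h1 := hb this
      have h2 := (le_max_right n₀ (b + 1)).trans hn
      omega
  obtain ⟨q, -, hq⟩ := Finset.exists_min_image Finset.univ (κ N) ⟨z, Finset.mem_univ z⟩
  let k : Fin d → ℕ := fun i => κ N i - κ N q
  have hae : ∀ᵐ x ∂σ, ∀ i, x i = chaconT^[k i] (x q) := by
    have h1 : ∀ᵐ x ∂σ, ∀ n, N ≤ n → x ∈ chaconCd (Fin d) n → x ∈ D n := by
      rw [ae_all_iff]
      intro n
      by_cases hn : N ≤ n
      · refine measure_mono_null ?_ (hD n (hN0.trans hn)).2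
        intro x hx
        have hx' : ¬ (N ≤ n → x ∈ chaconCd (Fin d) n → x ∈ D n) := hx
        push Not at hx'
        exact ⟨hx'.2.1, hx'.2.2⟩
      · exact Filter.Eventually.of_forall fun x h => absurd h hn
    filter_upwards [h1] with x hx i
    obtain ⟨m, hm⟩ := exists_Cd x
    apply eq_of_cel (N := max m N)
    intro n hn
    have hnm := (le_max_left m N).trans hn
    have hnN := (le_max_right m N).trans hn
    have hC := Cd_mono hm hnm
    obtain ⟨-, j, hj⟩ := hκ n (hN0.trans hnN) x (hx n hnN hC)
    have e1 := hj i
    have e2 := hj q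
    have d1 := congrFun (hN n hnN) i
    have d2 := congrFun (hN n hnN) q
    simp only [δ] at d1 d2
    have hqi := hq i (Finset.mem_univ i)
    have hci := mem_C_iff.1 (hC i)
    have hcq := mem_C_iff.1 (hC q)
    have hl : lev n (x i) = lev n (x q) + k i := by
      simp only [k]; omega
    have hit := T_iter_lev (n := n) (x := x q) (k i) (by omega) hcq.1
    exact cel_eq_of_lev hci.1 hit.1 (by omega)
  have hTd : Measurable (chaconTd (Fin d)) :=
    measurable_pi_lambda _ fun i => measurable_T.comp (measurable_pi_apply i)
  have hev : Measurable (fun x : Fin d → ChaconX => x q) := measurable_pi_apply q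
  let ν : Measure ChaconX := σ.map (fun x => x q)
  have hν : ∀ s, MeasurableSet s → ν s = σ ((fun x => x q) ⁻¹' s) := fun s hs =>
    Measure.map_apply hev hs
  have hνinv : ∀ s, MeasurableSet s → ν (chaconT ⁻¹' s) = ν s := by
    intro s hs
    rw [hν _ (measurable_T hs), hν _ hs]
    conv_rhs => rw [← hinv]
    rw [Measure.map_apply hTd (hev hs)]
    rfl
  let K := Finset.univ.sup k
  have hKH : K < chaconH K :=
    lt_of_lt_of_le (Nat.lt_pow_self (by norm_num : 1 < 6)) (chaconH_ge K)
  have hfin : ν (cell K (chM K 0)) < ⊤ := by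
    rw [hν _ (measurableSet_cell _ _)]
    have hbs : MeasurableSet (Set.univ.pi fun _ : Fin d => {x : ChaconX | (x : ℝ) ≤ chaconH K}) :=
      MeasurableSet.univ_pi fun _ => measurableSet_le measurable_subtype_coe measurable_const
    refine lt_of_le_of_lt ?_ (hbf (Set.univ.pi fun _ : Fin d => {x : ChaconX | (x : ℝ) ≤ chaconH K})
      hbs ?_)
    · apply measure_mono_ae
      filter_upwards [hae] with x hx hxq
      have hxq' : x q ∈ LevX K 0 := by
        rw [LevX_eq (chaconH_pos K)]; exact hxq
      intro i _
      have hki : k i ≤ K := Finset.le_sup (Finset.mem_univ i)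
      have := (T_iter_lev (n := K) (x := x q) (k i) (by rw [hxq'.2]; omega) hxq'.1).1
      rw [← hx i] at this
      unfold cel at this
      rw [Nat.floor_lt (cel_nonneg _ _)] at this
      refine le_trans ?_ this.le
      exact le_mul_of_one_le_right (x i).2 (one_le_pow₀ (by norm_num))
    · apply Bornology.IsBounded.pi
      intro _
      rw [Metric.isBounded_iff_subset_closedBall (⟨0, Set.mem_Ici.2 le_rfl⟩ : ChaconX)]
      refine ⟨chaconH K, fun x hx => ?_⟩
      rw [Metric.mem_closedBall, Subtype.dist_eq, Real.dist_eq]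
      simp only [sub_zero]
      rw [abs_of_nonneg x.2]
      exact hx
  have hM0 : chM K 0 = 0 := by
    have : ∀ n, chM n 0 = 0 := by
      intro n
      induction n with
      | zero => rfl
      | succ n ih => rw [chM_succ, if_pos (show 0 < chaconH n from chaconH_pos n), ih]
    exact this K
  rw [hM0] at hfin
  obtain ⟨hα, hνμ⟩ := invariant_unique ν hνinv K hfin
  refine ⟨ν (cell 0 0), fun i => (k i : ℤ), ?_, hα, ?_⟩
  · rw [pos_iff_ne_zero]
    intro h0
    rw [h0, zero_smul] at hνμ
    have h1 : ν Set.univ = 0 := by rw [hνμ]; rfl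
    rw [hν _ MeasurableSet.univ, Set.preimage_univ] at h1
    exact (hpos n₀ le_rfl).ne' (measure_mono_null (Set.subset_univ _) h1)
  · intro A hA
    have hmeas : MeasurableSet (⋂ i, chaconTZ ((k i : ℕ) : ℤ) ⁻¹' A i) := by
      refine MeasurableSet.iInter fun i => ?_
      rw [chaconTZ_nat]
      exact (measurable_T.iterate _) (hA i)
    have : ν (⋂ i, chaconTZ ((k i : ℕ) : ℤ) ⁻¹' A i) =
        ν (cell 0 0) * chaconMu (⋂ i, chaconTZ ((k i : ℕ) : ℤ) ⁻¹' A i) := by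
      conv_lhs => rw [hνμ]
      rw [Measure.smul_apply, smul_eq_mul]
    rw [← this, hν _ hmeas]
    apply measure_congr
    rw [Filter.eventuallyEq_set]
    filter_upwards [hae] with x hx
    simp only [Set.mem_univ_pi, Set.mem_preimage, Set.mem_iInter, chaconTZ_nat]
    constructor
    · intro h i; rw [← hx i]; exact h i
    · intro h i; rw [hx i]; exact h i
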